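/- Let X ⊆ Z^d be a finite lattice-convex set satisfying dim(X) ≥ (k-1)·binom(k, floor(k/2)) for some integer k ≥ 2. Then rc(X) ≥ k+1. -/

import Mathlib

/-!
Suppose a finite set `X ⊆ ℤ^d` is described by inequalities `A i ⬝ x ≤ b i`, `i ∈ [k]`, and some
equations. For `x ∈ X` let `T x ⊆ [k]` be the set of inequalities tight at `x`, and for
`I ⊆ [k]` let `Λ_I` be the lattice of integer vectors orthogonal to the rows in `I` and to all
equations.

If `I = T x` for some `x ∈ X`, then `x` has positive slack outside `I`, so only finitely many
`w ∈ Λ_I` satisfy `A i ⬝ w ≤ ε i` for all `i ∉ I`. Dropping one index `j ∉ I` and replacing `w` by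
`-w` if `A j ⬝ w > 0`, only finitely many `w ∈ Λ_I` have `|A i ⬝ w| < ε i` for the remaining
indices. Hence `Λ_I` embeds as a discrete subgroup of `ℝ^(k - |I| - 1)`, and its rank is at most
`k - |I| - 1` (and it is zero when `I = [k]`); this is `finrank_faceLattice_le`.

If `T x = ∅` for some `x`, then `dim X ≤ k - 1`. Otherwise the inclusion-minimal sets `T x` form
an antichain, with at most `binom(k, ⌊k/2⌋)` members by Sperner's theorem, and `X` is covered by
the corresponding faces, each of dimension at most `k - 2`. Counting affinely independent points
gives `dim X + 1 ≤ (k - 1) * binom(k, ⌊k/2⌋)`; this is `dimX_lt_of_relaxation`.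

Since `rc` is an infimum in `ℕ`, the existence of some description is needed as well; it is
`exists_isRelaxation`, where lattice-convexity enters.
-/


/-- Coercion of an integer point to a real point. -/
def ZtoR {d : ℕ} (x : Fin d → ℤ) : Fin d → ℝ := fun i => (x i : ℝ)

/-- `X ⊆ ℤ^d` is lattice-convex if `conv(X) ∩ ℤ^d = X`. -/
def IsLatticeConvex {d : ℕ} (X : Set (Fin d → ℤ)) : Prop :=
  ∀ z : Fin d → ℤ, ZtoR z ∈ convexHull ℝ (ZtoR '' X) → z ∈ X

/-- `X` is described within `ℤ^d` by a system of `k` real linear inequalities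
(together with finitely many linear equations). -/
def IsRelaxation {d : ℕ} (X : Set (Fin d → ℤ)) (k : ℕ) : Prop :=
  ∃ (m : ℕ) (A : Fin k → Fin d → ℝ) (b : Fin k → ℝ) (U : Fin m → Fin d → ℝ) (v : Fin m → ℝ),
    X = {x : Fin d → ℤ |
      (∀ i, ∑ j, A i j * (x j : ℝ) ≤ b i) ∧ ∀ i, ∑ j, U i j * (x j : ℝ) = v i}

/-- The relaxation complexity of `X` within `ℤ^d`. -/
noncomputable def rc {d : ℕ} (X : Set (Fin d → ℤ)) : ℕ := sInf {k | IsRelaxation X k}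

/-- `X` is described within `ℤ^d` by a system of `k` rational linear inequalities
(together with finitely many rational linear equations). -/
def IsRelaxationQ {d : ℕ} (X : Set (Fin d → ℤ)) (k : ℕ) : Prop :=
  ∃ (m : ℕ) (A : Fin k → Fin d → ℚ) (b : Fin k → ℚ) (U : Fin m → Fin d → ℚ) (v : Fin m → ℚ),
    X = {x : Fin d → ℤ |
      (∀ i, ∑ j, A i j * (x j : ℚ) ≤ b i) ∧ ∀ i, ∑ j, U i j * (x j : ℚ) = v i}

/-- The rational relaxation complexity of `X` within `ℤ^d`. -/
noncomputable def rcQ {d : ℕ} (X : Set (Fin d → ℤ)) : ℕ := sInf {k | IsRelaxationQ X k}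

/-- The dimension of `X`, i.e. the dimension of its affine hull. -/
noncomputable def dimX {d : ℕ} (X : Set (Fin d → ℤ)) : ℕ :=
  Module.finrank ℝ (affineSpan ℝ (ZtoR '' X)).direction

/-! ### Ranks of lattices with finitely many points in a box or orthant -/

open Module in
/-- If only finitely many elements of a torsion-free abelian group have all of `m` real
coordinates small, then these coordinates embed the group as a discrete subgroup of `ℝ^m`, so
its rank is at most `m`. -/
lemma finrank_le_card_of_finite_box {M ι : Type*} [AddCommGroup M] [IsAddTorsionFree M]
    [Fintype ι] (l : ι → M →ₗ[ℤ] ℝ) (ε : ι → ℝ) (hε : ∀ i, 0 < ε i)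
    (hfin : {w : M | ∀ i, |l i w| < ε i}.Finite) :
    finrank ℤ M ≤ Fintype.card ι := by
  set ψ : M →ₗ[ℤ] (ι → ℝ) := LinearMap.pi l with hψ
  have : Module.IsTorsionFree ℤ M := Module.isTorsionFree_int_iff_isAddTorsionFree.2 ‹_›
  have hinj : Function.Injective ψ := by
    rw [← LinearMap.ker_eq_bot, LinearMap.ker_eq_bot']
    intro w hw
    by_contra hne
    have hinf : (Set.range fun n : ℤ => n • w).Infinite :=
      Set.infinite_range_of_injective (smul_left_injective ℤ hne)
    refine hinf (hfin.subset ?_)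
    rintro _ ⟨n, rfl⟩ i
    have : l i w = 0 := congrFun hw i
    simp [this, hε i]
  have hdisc : DiscreteTopology (LinearMap.range ψ) := by
    rw [discreteTopology_iff_isOpen_singleton_zero]
    set O : Set (LinearMap.range ψ) := {y | ∀ i, |y.1 i| < ε i} with hO
    have hOopen : IsOpen O := by
      rw [hO, Set.ofPred_forall]
      refine isOpen_iInter_of_finite fun i => ?_
      exact isOpen_lt ((continuous_apply i).comp continuous_subtype_val).abs continuous_const
    have hOfin : O.Finite := by
      refine (hfin.image ψ.rangeRestrict).subset ?_
      rintro ⟨_, w, rfl⟩ hw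
      exact ⟨w, hw, rfl⟩
    have h0 : ({0} : Set (LinearMap.range ψ)) = O \ (O \ {0}) := by
      ext y
      simp only [Set.mem_singleton_iff, Set.mem_sdiff, not_and, not_not]
      refine ⟨?_, fun h => h.2 h.1⟩
      rintro rfl
      exact ⟨fun i => by simp [hε i], fun _ => rfl⟩
    rw [h0]
    exact hOopen.sdiff (hOfin.subset Set.sdiff_subset).isClosed
  have hspan : Submodule.span ℤ (LinearMap.range ψ : Set (ι → ℝ)) = LinearMap.range ψ :=
    Submodule.span_eq _
  have key := Real.finrank_eq_int_finrank_of_discrete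
    (s := (LinearMap.range ψ : Set (ι → ℝ))) (by rw [hspan]; exact hdisc)
  rw [Set.finrank, Set.finrank, hspan] at key
  rw [(LinearEquiv.ofInjective ψ hinj).finrank_eq, ← key]
  exact (Submodule.finrank_le _).trans (by simp)

open Module in
/-- The one-sided version of `finrank_le_card_of_finite_box` gains one dimension: dropping one
coordinate leaves a box that is, up to sign, contained in the one-sided region. -/
lemma finrank_le_of_finite_orthant {M ι : Type*} [AddCommGroup M] [IsAddTorsionFree M]
    [Fintype ι] (l : ι → M →ₗ[ℤ] ℝ) (ε : ι → ℝ) (hε : ∀ i, 0 < ε i)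
    (hfin : {w : M | ∀ i, l i w ≤ ε i}.Finite) :
    finrank ℤ M ≤ Fintype.card ι - 1 := by
  classical
  rcases isEmpty_or_nonempty ι with hι | ⟨⟨j⟩⟩
  · have := finrank_le_card_of_finite_box l ε hε
      (hfin.subset fun w hw i => (abs_lt.1 (hw i)).2.le)
    simpa using this
  · have h := finrank_le_card_of_finite_box (fun i : {i // i ≠ j} => l i) (fun i => ε i)
      (fun i => hε i) ?_
    · simpa [Fintype.card_subtype_compl] using h
    · have hneg := hfin.image (fun w => -w)
      refine (hfin.union hneg).subset fun w hw => ?_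
      rcases le_total (l j w) 0 with hj | hj
      · left
        intro i
        by_cases hij : i = j
        · subst hij; exact hj.trans (hε i).le
        · exact (abs_lt.1 (hw ⟨i, hij⟩)).2.le
      · right
        refine ⟨-w, fun i => ?_, neg_neg w⟩
        rw [map_neg]
        by_cases hij : i = j
        · subst hij; linarith [hε i]
        · have := (abs_lt.1 (hw ⟨i, hij⟩)).1
          simp only at this
          linarith

/-! ### Face lattices -/

/-- The linear form on `ℤ^d` with real coefficient vector `a`. -/
def latticeForm {d : ℕ} (a : Fin d → ℝ) : (Fin d → ℤ) →ₗ[ℤ] ℝ where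
  toFun w := ∑ j, a j * (w j : ℝ)
  map_add' x y := by simp [mul_add, Finset.sum_add_distrib]
  map_smul' n x := by
    simp only [Pi.smul_apply, smul_eq_mul, Int.cast_mul, Finset.mul_sum, RingHom.id_apply,
      zsmul_eq_mul]
    exact Finset.sum_congr rfl fun j _ => by ring

/-- `ZtoR` as a `ℤ`-linear map. -/
def latticeEmb (d : ℕ) : (Fin d → ℤ) →ₗ[ℤ] (Fin d → ℝ) where
  toFun := ZtoR
  map_add' x y := by ext i; simp [ZtoR]
  map_smul' n x := by ext i; simp [ZtoR]

/-- The lattice of integer directions of the face on which the inequalities in `I` (and all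
equations) are tight. -/
def faceLattice {d k m : ℕ} (A : Fin k → Fin d → ℝ) (U : Fin m → Fin d → ℝ)
    (I : Finset (Fin k)) : Submodule ℤ (Fin d → ℤ) where
  carrier := {w | (∀ i ∈ I, latticeForm (A i) w = 0) ∧ ∀ i, latticeForm (U i) w = 0}
  add_mem' := by
    rintro x y ⟨hx, hx'⟩ ⟨hy, hy'⟩
    exact ⟨fun i hi => by rw [map_add, hx i hi, hy i hi, add_zero],
      fun i => by rw [map_add, hx' i, hy' i, add_zero]⟩
  zero_mem' := by simp
  smul_mem' := by
    rintro n x ⟨hx, hx'⟩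
    exact ⟨fun i hi => by rw [map_smul, hx i hi, smul_zero],
      fun i => by rw [map_smul, hx' i, smul_zero]⟩

open Module in
/-- Around a point whose set of tight inequalities is exactly `I`, every short lattice direction
of the face stays feasible, so finiteness bounds the rank of the face lattice. -/
lemma finrank_faceLattice_le {d k m : ℕ} (A : Fin k → Fin d → ℝ) (b : Fin k → ℝ)
    (U : Fin m → Fin d → ℝ) (v : Fin m → ℝ) (X : Set (Fin d → ℤ)) (hfin : X.Finite)
    (hX : ∀ x, x ∈ X ↔ (∀ i, latticeForm (A i) x ≤ b i) ∧ ∀ i, latticeForm (U i) x = v i)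
    (I : Finset (Fin k)) (x : Fin d → ℤ) (hx : x ∈ X)
    (hI : ∀ i, i ∈ I ↔ latticeForm (A i) x = b i) :
    finrank ℤ (faceLattice A U I) ≤ k - I.card - 1 := by
  classical
  have hx' := (hX x).1 hx
  have : IsAddTorsionFree (faceLattice A U I) :=
    Subtype.val_injective.isAddTorsionFree (faceLattice A U I).subtype.toAddMonoidHom
  have h := finrank_le_of_finite_orthant (M := faceLattice A U I) (ι := {i // i ∉ I})
    (fun i => (latticeForm (A i)).comp (faceLattice A U I).subtype)
    (fun i => b i - latticeForm (A i) x)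
    (fun i => sub_pos.2 (lt_of_le_of_ne (hx'.1 i) fun h => i.2 ((hI i).2 h))) ?_
  · simpa [Fintype.card_subtype_compl] using h
  · refine Set.Finite.of_finite_image (f := fun w : faceLattice A U I => x + w.1)
      (hfin.subset ?_) ?_
    · rintro _ ⟨w, hw, rfl⟩
      refine (hX _).2 ⟨fun i => ?_, fun i => ?_⟩
      · by_cases hi : i ∈ I
        · simp only [map_add, w.2.1 i hi, add_zero]; exact hx'.1 i
        · have := hw ⟨i, hi⟩
          simp only [LinearMap.comp_apply, Submodule.subtype_apply] at this
          simp only [map_add]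
          linarith
      · simp only [map_add, w.2.2 i, add_zero]; exact hx'.2 i
    · intro w _ w' _ h
      exact Subtype.ext (add_left_cancel h)

/-! ### Dimension counting -/

open Module in
/-- The real span of a sublattice of `ℤ^d` has dimension at most the rank of the sublattice. -/
lemma finrank_span_latticeEmb_le {d : ℕ} (L : Submodule ℤ (Fin d → ℤ)) :
    finrank ℝ (Submodule.span ℝ (latticeEmb d '' L)) ≤ finrank ℤ L := by
  classical
  set B := Module.finBasis ℤ L
  have hle : Submodule.span ℝ (latticeEmb d '' L) ≤
      Submodule.span ℝ (Set.range fun i => latticeEmb d (B i).1) := by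
    rw [Submodule.span_le]
    rintro _ ⟨w, hw, rfl⟩
    have h := congrArg (fun y : L => latticeEmb d y.1) (B.sum_repr ⟨w, hw⟩)
    simp only [Submodule.coe_sum, Submodule.coe_smul, map_sum, map_smul] at h
    rw [← h]
    refine Submodule.sum_mem _ fun i _ => ?_
    rw [← Int.cast_smul_eq_zsmul ℝ]
    exact Submodule.smul_mem _ _ (Submodule.subset_span ⟨i, rfl⟩)
  refine (Submodule.finrank_mono hle).trans ((finrank_range_le_card _).trans ?_)
  simp

open Module in
lemma finrank_finset_sup_le {V α : Type*} [AddCommGroup V] [Module ℝ V] [FiniteDimensional ℝ V]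
    (s : Finset α) (W : α → Submodule ℝ V) :
    finrank ℝ (s.sup W : Submodule ℝ V) ≤ ∑ a ∈ s, finrank ℝ (W a) := by
  classical
  induction s using Finset.induction_on with
  | empty => simp
  | insert a s ha ih =>
    rw [Finset.sup_insert, Finset.sum_insert ha]
    exact (Submodule.finrank_add_le_finrank_add_finrank _ _).trans (by gcongr)

/-- If all differences to one point `p ∈ X` lie in `V`, then `dim X ≤ dim V`. -/
lemma dimX_le {d : ℕ} (X : Set (Fin d → ℤ)) (V : Submodule ℝ (Fin d → ℝ)) (p : Fin d → ℤ)
    (hp : p ∈ X) (h : ∀ x ∈ X, latticeEmb d (x - p) ∈ V) : dimX X ≤ Module.finrank ℝ V := by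
  rw [dimX, direction_affineSpan,
    vectorSpan_eq_span_vsub_set_right ℝ (Set.mem_image_of_mem ZtoR hp)]
  refine Submodule.finrank_mono ?_
  rw [Submodule.span_le]
  rintro _ ⟨_, ⟨x, hx, rfl⟩, rfl⟩
  have := h x hx
  rwa [map_sub] at this

/-! ### Antichains of tight sets -/

lemma two_le_centralChoose {k : ℕ} (hk : 2 ≤ k) : 2 ≤ k.choose (k / 2) :=
  calc 2 ≤ k := hk
    _ = k.choose 1 := (Nat.choose_one_right k).symm
    _ ≤ _ := Nat.choose_le_middle 1 k

open Module in
/-- A nonempty finite set described by `k` inequalities and some equations has dimension less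
than `(k-1) * binom(k, ⌊k/2⌋)`: it is covered by the faces belonging to the minimal tight sets,
which form an antichain. -/
lemma dimX_lt_of_relaxation {d k : ℕ} (hk : 2 ≤ k) (X : Set (Fin d → ℤ)) (hfin : X.Finite)
    (hne : X.Nonempty) (h : IsRelaxation X k) : dimX X < (k - 1) * k.choose (k / 2) := by
  classical
  obtain ⟨m, A, b, U, v, hXeq⟩ := h
  have hX : ∀ x, x ∈ X ↔
      (∀ i, latticeForm (A i) x ≤ b i) ∧ ∀ i, latticeForm (U i) x = v i := by
    intro x
    conv_lhs => rw [hXeq]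
    rfl
  let T : (Fin d → ℤ) → Finset (Fin k) := fun x =>
    Finset.univ.filter fun i => latticeForm (A i) x = b i
  have hT : ∀ x i, i ∈ T x ↔ latticeForm (A i) x = b i := fun x i => by simp [T]
  have hface : ∀ x ∈ X, finrank ℤ (faceLattice A U (T x)) ≤ k - (T x).card - 1 := fun x hx =>
    finrank_faceLattice_le A b U v X hfin hX (T x) x hx (hT x)
  have hdiff : ∀ x ∈ X, ∀ y ∈ X, T x ⊆ T y → y - x ∈ faceLattice A U (T x) := by
    intro x hx y hy hxy
    refine ⟨fun i hi => ?_, fun i => ?_⟩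
    · rw [map_sub, (hT x i).1 hi, (hT y i).1 (hxy hi), sub_self]
    · rw [map_sub, ((hX x).1 hx).2 i, ((hX y).1 hy).2 i, sub_self]
  have hC := two_le_centralChoose hk
  by_cases hempty : ∃ x ∈ X, T x = ∅
  · -- an interior point: the whole set lies in the single face with no tight inequality
    obtain ⟨x, hx, hTx⟩ := hempty
    have h1 : dimX X ≤ k - 1 := by
      refine (dimX_le X _ x hx fun y hy => Submodule.subset_span
        (Set.mem_image_of_mem _ (hdiff x hx y hy (by simp [hTx])))).trans
        ((finrank_span_latticeEmb_le _).trans ((hface x hx).trans ?_))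
      simp [hTx]
    have : (k - 1) * 2 ≤ (k - 1) * k.choose (k / 2) := Nat.mul_le_mul_left _ hC
    omega
  · push Not at hempty
    have hrank : ∀ x ∈ X, finrank ℤ (faceLattice A U (T x)) ≤ k - 2 := fun x hx => by
      have h1 := hface x hx
      have h2 := Finset.card_pos.2 (hempty x hx)
      omega
    let F : Finset (Finset (Fin k)) :=
      Finset.univ.filter fun I => Minimal (fun J => J ∈ T '' X) I
    have hF : ∀ I, I ∈ F ↔ Minimal (fun J => J ∈ T '' X) I := fun I => by simp [F]
    have hanti : IsAntichain (· ⊆ ·) (F : Set (Finset (Fin k))) := by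
      intro I hI J hJ hIJ hsub
      exact hIJ (((hF J).1 hJ).eq_of_le ((hF I).1 hI).prop hsub)
    have hcard := hanti.sperner
    rw [Fintype.card_fin] at hcard
    have hex : ∀ x ∈ X, ∃ I ∈ F, I ⊆ T x := fun x hx => by
      obtain ⟨I, hI, hmin⟩ := exists_minimal_le_of_wellFoundedLT
        (fun J => J ∈ T '' X) (T x) ⟨x, hx, rfl⟩
      exact ⟨I, (hF I).2 hmin, hI⟩
    have hrep : ∀ I : Finset (Fin k), ∃ r, I ∈ F → r ∈ X ∧ T r = I := fun I => by
      by_cases hI : I ∈ F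
      · obtain ⟨r, hr⟩ := ((hF I).1 hI).prop
        exact ⟨r, fun _ => hr⟩
      · exact ⟨0, fun h => absurd h hI⟩
    choose r hr using hrep
    obtain ⟨x₀, hx₀⟩ := hne
    obtain ⟨I₀, hI₀, -⟩ := hex x₀ hx₀
    let W : Finset (Fin k) → Submodule ℝ (Fin d → ℝ) := fun I =>
      Submodule.span ℝ (latticeEmb d '' faceLattice A U I)
    let V : Finset (Fin k) → Submodule ℝ (Fin d → ℝ) := fun I =>
      W I ⊔ Submodule.span ℝ {latticeEmb d (r I - r I₀)}
    have hW : ∀ I ∈ F, finrank ℝ (W I) ≤ k - 2 := fun I hI => by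
      have h1 := hrank (r I) (hr I hI).1
      rw [(hr I hI).2] at h1
      exact (finrank_span_latticeEmb_le _).trans h1
    have hV : ∀ I ∈ F, finrank ℝ (V I) ≤ k - 1 := fun I hI => by
      have h1 := Submodule.finrank_add_le_finrank_add_finrank (W I)
        (Submodule.span ℝ {latticeEmb d (r I - r I₀)})
      have h2 := finrank_span_le_card (R := ℝ) ({latticeEmb d (r I - r I₀)} : Set (Fin d → ℝ))
      rw [Set.toFinset_singleton, Finset.card_singleton] at h2
      have h3 := hW I hI
      change finrank ℝ (V I) ≤ _ at h1
      omega
    -- the base point is the representative of `I₀`, so the face of `I₀` needs no extra direction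
    have hV₀ : finrank ℝ (V I₀) < k - 1 := by
      have h1 : V I₀ = W I₀ := by simp [V]
      have h3 := hW I₀ hI₀
      rw [h1]
      omega
    calc dimX X ≤ finrank ℝ (F.sup V : Submodule ℝ (Fin d → ℝ)) := by
          refine dimX_le X _ (r I₀) (hr I₀ hI₀).1 fun x hx => ?_
          obtain ⟨I, hI, hIx⟩ := hex x hx
          refine (Finset.le_sup hI : V I ≤ F.sup V) ?_
          have hs : x - r I₀ = (x - r I) + (r I - r I₀) := by abel
          rw [hs, map_add]
          refine Submodule.add_mem_sup (Submodule.subset_span ⟨x - r I, ?_, rfl⟩)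
            (Submodule.mem_span_singleton_self _)
          have h1 := hdiff (r I) (hr I hI).1 x hx (by rw [(hr I hI).2]; exact hIx)
          rwa [(hr I hI).2] at h1
      _ ≤ ∑ I ∈ F, finrank ℝ (V I) := finrank_finset_sup_le _ _
      _ < ∑ _I ∈ F, (k - 1) := Finset.sum_lt_sum hV ⟨I₀, hI₀, hV₀⟩
      _ = (k - 1) * F.card := by rw [Finset.sum_const, smul_eq_mul, mul_comm]
      _ ≤ (k - 1) * k.choose (k / 2) := Nat.mul_le_mul_left _ hcard

/-! ### Existence of a description -/

lemma IsRelaxation.mono {d j k : ℕ} {X : Set (Fin d → ℤ)} (h : IsRelaxation X j) (hjk : j ≤ k) :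
    IsRelaxation X k := by
  obtain ⟨m, A, b, U, v, hX⟩ := h
  -- pad with the trivial inequality `0 ≤ 0`
  refine ⟨m, fun i => if h : i.1 < j then A ⟨i, h⟩ else 0,
    fun i => if h : i.1 < j then b ⟨i, h⟩ else 0, U, v, ?_⟩
  rw [hX]
  ext x
  refine and_congr_left fun _ => ⟨fun h i => ?_, fun h i => ?_⟩
  · by_cases hi : i.1 < j
    · simpa [hi] using h ⟨i, hi⟩
    · simp [hi]
  · simpa using h (Fin.castLE hjk i)

/-- Without this, `rc X` could be the junk value `sInf ∅ = 0`. The inequalities are those of a box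
containing `X`, together with one separating inequality for each integer point of the box
outside `X`. -/
lemma exists_isRelaxation {d : ℕ} (X : Set (Fin d → ℤ)) (hfin : X.Finite)
    (hlc : IsLatticeConvex X) : ∃ k, IsRelaxation X k := by
  classical
  obtain ⟨lo, hlo⟩ := hfin.bddBelow
  obtain ⟨hi, hhi⟩ := hfin.bddAbove
  have hsep : ∀ z : Fin d → ℤ, z ∉ X → ∃ (a : Fin d → ℝ) (c : ℝ),
      (∀ x ∈ X, ∑ j, a j * (x j : ℝ) ≤ c) ∧ c < ∑ j, a j * (z j : ℝ) := by
    intro z hz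
    have hz' : ZtoR z ∉ convexHull ℝ (ZtoR '' X) := fun h => hz (hlc z h)
    obtain ⟨f, c, hf, hc⟩ := geometric_hahn_banach_closed_point (convex_convexHull ℝ _)
      ((hfin.image ZtoR).isClosed_convexHull ℝ) hz'
    have hrepr : ∀ x : Fin d → ℤ,
        f (ZtoR x) = ∑ j, f (Pi.single j 1) * (x j : ℝ) := fun x => by
      rw [← ContinuousLinearMap.coe_coe, LinearMap.pi_apply_eq_sum_univ]
      refine Finset.sum_congr rfl fun j _ => ?_
      have hj : (fun i => if j = i then (1 : ℝ) else 0) = Pi.single j 1 := by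
        ext i; simp [Pi.single_apply, eq_comm]
      rw [hj, smul_eq_mul, mul_comm]
      rfl
    refine ⟨fun j => f (Pi.single j 1), c, fun x hx => ?_, ?_⟩
    · rw [← hrepr]
      exact (hf _ (subset_convexHull ℝ _ (Set.mem_image_of_mem _ hx))).le
    · rw [← hrepr]; exact hc
  choose! a c hac hcz using hsep
  let ι := Fin d ⊕ Fin d ⊕ {z // z ∈ Finset.Icc lo hi \ hfin.toFinset}
  let A : ι → Fin d → ℝ := Sum.elim (fun j => Pi.single j 1)
    (Sum.elim (fun j => Pi.single j (-1)) fun z => a z)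
  let b : ι → ℝ := Sum.elim (fun j => hi j) (Sum.elim (fun j => -lo j) fun z => c z)
  let e := Fintype.equivFin ι
  refine ⟨Fintype.card ι, 0, fun i => A (e.symm i), fun i => b (e.symm i), Fin.elim0, Fin.elim0, ?_⟩
  have hs : ∀ (x : Fin d → ℤ) (j : Fin d) (t : ℝ),
      ∑ i, (Pi.single j t : Fin d → ℝ) i * (x i : ℝ) = t * x j := fun x j t => by
    simp [Pi.single_apply, ite_mul]
  ext x
  simp only [Set.mem_ofPred_eq, IsEmpty.forall_iff, and_true]
  rw [e.symm.forall_congr_right (q := fun i => ∑ j, A i j * (x j : ℝ) ≤ b i)]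
  simp only [ι, A, b, Sum.forall, Sum.elim_inl, Sum.elim_inr, hs]
  constructor
  · intro hx
    refine ⟨fun j => ?_, fun j => ?_, fun z => ?_⟩
    · simpa using hhi hx j
    · simpa using hlo hx j
    · have hz := z.2
      simp only [Finset.mem_sdiff, Set.Finite.mem_toFinset] at hz
      exact hac z hz.2 x hx
  · rintro ⟨h1, h2, h3⟩
    by_contra hx
    refine absurd (h3 ⟨x, ?_⟩) (not_le.2 (hcz x hx))
    simp only [Finset.mem_sdiff, Finset.mem_Icc, Set.Finite.mem_toFinset]
    exact ⟨⟨fun j => by simpa using h2 j, fun j => by simpa using h1 j⟩, hx⟩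

/-- If `X ⊆ ℤ^d` is finite and lattice-convex with
`dim(X) ≥ (k-1)·binom(k, ⌊k/2⌋)` for some `k ≥ 2`, then `rc(X) ≥ k+1`. -/
theorem rc_ge_of_dim_ge_sperner {d : ℕ} (X : Set (Fin d → ℤ)) (hfin : X.Finite)
    (hlc : IsLatticeConvex X) (k : ℕ) (hk : 2 ≤ k)
    (hdim : (k - 1) * Nat.choose k (k / 2) ≤ dimX X) :
    k + 1 ≤ rc X := by
  by_contra hlt
  have hrc : IsRelaxation X (rc X) := Nat.sInf_mem (exists_isRelaxation X hfin hlc)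
  have hrk : IsRelaxation X k := hrc.mono (by omega)
  rcases X.eq_empty_or_nonempty with hX | hne
  · have h0 : dimX X = 0 := by
      rw [dimX, hX, Set.image_empty, AffineSubspace.span_empty, AffineSubspace.direction_bot,
        finrank_bot]
    have hpos : 0 < (k - 1) * k.choose (k / 2) :=
      Nat.mul_pos (by omega) (by have := two_le_centralChoose hk; omega)
    omega
  · exact absurd (dimX_lt_of_relaxation hk X hfin hne hrk) (not_lt.2 hdim)
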